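/- (Strict initial decay of |ψ|² on a circle orthogonal to the axis of concentration.) Let 0 < s < 1 and let the collision kernel b satisfy b(cos θ)·θ^{2+2s} → K as θ → 0+ for some K > 0. Let F₀ be a Borel probability measure on ℝ³ concentrated on the third coordinate axis (F₀({(0,0,v₃) : v₃ ∈ ℝ}) = 1) but not a single Dirac mass, let ψ₀ ∈ 𝒦^α (for some α ∈ (2s,2]) be its characteristic function, and let ψ be a solution of the Fourier-transformed (Bobylev) homogeneous Boltzmann Cauchy problem with initial datum ψ₀. Then there exist λ > 0 and c₁ > 0 such that ∂_t(|ψ|²)(0, ξ) ≤ −c₁ for every ξ ∈ ℝ³ with ξ·e₃ = 0 and |ξ| = λ, where e₃ = (0,0,1). -/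

import Mathlib

noncomputable section

open MeasureTheory Real Filter Metric Set
open scoped RealInnerProductSpace Topology

/-- ℝ³ as a Euclidean space. -/
abbrev E3 : Type := EuclideanSpace ℝ (Fin 3)

/-- The surface measure on the unit sphere S² ⊂ ℝ³. -/
def sphμ : Measure (sphere (0 : E3) 1) := (volume : Measure E3).toSphere

/-- The characteristic function (Fourier transform) of a Borel measure on ℝ³,
`ψ(ξ) = ∫ e^{-i v·ξ} dΨ(v)`. -/
def charFn (Ψ : Measure E3) (ξ : E3) : ℂ :=
  ∫ v, Complex.exp (-(Complex.I * (⟪v, ξ⟫ : ℂ))) ∂Ψ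

/-- `ψ` is a characteristic function of some Borel probability measure on ℝ³. -/
def IsCharFn (ψ : E3 → ℂ) : Prop :=
  ∃ Ψ : Measure E3, IsProbabilityMeasure Ψ ∧ ψ = charFn Ψ

/-- Finiteness of `‖φ - 1‖_α`, i.e. the quantitative part of membership in `𝒦^α`. -/
def KBdd (α : ℝ) (φ : E3 → ℂ) : Prop :=
  ∃ C : ℝ, ∀ ξ : E3, ξ ≠ 0 → ‖φ ξ - 1‖ ≤ C * ‖ξ‖ ^ α

/-- Membership in the space `𝒦^α`. -/
def memK (α : ℝ) (φ : E3 → ℂ) : Prop := IsCharFn φ ∧ KBdd α φ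

/-- The distance `‖φ - φ'‖_α = sup_{ξ ≠ 0} |φ(ξ) - φ'(ξ)|/|ξ|^α` on `𝒦^α`. -/
def Kdist (α : ℝ) (φ φ' : E3 → ℂ) : ℝ :=
  ⨆ ξ : {ξ : E3 // ξ ≠ 0}, ‖φ ξ.1 - φ' ξ.1‖ / ‖(ξ.1 : E3)‖ ^ α

/-- `ξ⁺ = ξ/2 + (|ξ|/2)σ`. -/
def xiPlus (ξ : E3) (σ : sphere (0 : E3) 1) : E3 := (1/2 : ℝ) • ξ + (‖ξ‖ / 2) • (σ : E3)

/-- `ξ⁻ = ξ/2 - (|ξ|/2)σ`. -/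
def xiMinus (ξ : E3) (σ : sphere (0 : E3) 1) : E3 := (1/2 : ℝ) • ξ - (‖ξ‖ / 2) • (σ : E3)

/-- The Bobylev collision integrand at time `t`, frequency `ξ`, direction `σ`. -/
def bobylevIntegrand (b : ℝ → ℝ) (ψ : ℝ → E3 → ℂ) (t : ℝ) (ξ : E3)
    (σ : sphere (0 : E3) 1) : ℂ :=
  (b (⟪ξ, (σ : E3)⟫ / ‖ξ‖) : ℂ) *
    (ψ t (xiPlus ξ σ) * ψ t (xiMinus ξ σ) - ψ t ξ)

/-- `ψ : [0,∞) × ℝ³ → ℂ` is a solution of the Fourier-transformed (Bobylev)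
homogeneous Boltzmann Cauchy problem with collision kernel `b` and initial datum `ψ₀`. -/
structure IsBobylevSolution (b : ℝ → ℝ) (ψ : ℝ → E3 → ℂ) (ψ₀ : E3 → ℂ) : Prop where
  cont : ContinuousOn (fun p : ℝ × E3 => ψ p.1 p.2) (Set.Ici 0 ×ˢ Set.univ)
  init : ψ 0 = ψ₀
  isCharFn : ∀ t ≥ 0, IsCharFn (ψ t)
  integrable : ∀ t ≥ 0, ∀ ξ : E3, Integrable (bobylevIntegrand b ψ t ξ) sphμ
  eq : ∀ t ≥ 0, ∀ ξ : E3, HasDerivWithinAt (fun τ => ψ τ ξ)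
      (∫ σ, bobylevIntegrand b ψ t ξ σ ∂sphμ) (Set.Ici 0) t

/-- Continuity of `t ↦ ψ(t,·)` from `[0,∞)` into the metric space `(𝒦^α, ‖·‖_α)`. -/
def KContinuous (α : ℝ) (ψ : ℝ → E3 → ℂ) : Prop :=
  ∀ t₀ ∈ Set.Ici (0:ℝ), Tendsto (fun t => Kdist α (ψ t) (ψ t₀)) (𝓝[Set.Ici (0:ℝ)] t₀) (𝓝 0)

/-- The angular singularity assumption `b(cos θ) θ^{2+2s} → K` as `θ → 0+`. -/
def KernelSingular (b : ℝ → ℝ) (s K : ℝ) : Prop :=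
  Tendsto (fun θ : ℝ => b (Real.cos θ) * θ ^ (2 + 2*s)) (𝓝[>] 0) (𝓝 K)

/-!
Let `φ` be the characteristic function of the third velocity coordinate under `F₀`. Since `F₀` lives
on the third axis, its characteristic function at `ξ` is `φ (ξ 2)`, up to conjugation. If `ξ 2 = 0`
it equals `1` at `ξ`, its values at `ξ⁺` and `ξ⁻` are conjugate to each other, and the equation
reads `∂ₜ|ψ|²(0, ξ) = -2 ∫ b (1 - |φ(|ξ| σ₃ / 2)|²) dσ`, with a nonnegative integrand.

If `|φ|` were `1` at two points of irrational ratio, then `F₀` would be carried by a translate of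
each of two lattices on the axis which meet only in `0`, hence by a point. So `|φ| < 1` at
arbitrarily small arguments, and by continuity the integrand is positive on a nonempty open set of
almost grazing directions `σ`. The reflection exchanging two frequencies of the circle fixes the
axis, so the integral is constant on the circle and the strict inequality is uniform there.
-/

section CharFun

variable {E : Type*} [NormedAddCommGroup E] [InnerProductSpace ℝ E] [MeasurableSpace E]

lemma exists_ae_cexp_inner_eq_of_norm_charFun_eq_one {μ : Measure E} [IsProbabilityMeasure μ]
    {t : E} (ht : ‖charFun μ t‖ = 1) : ∃ z : ℂ, ∀ᵐ x ∂μ, Complex.exp (⟪x, t⟫ * Complex.I) = z := by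
  have hle : ∀ᵐ x ∂μ, ‖Complex.exp (⟪x, t⟫ * Complex.I)‖ ≤ 1 :=
    .of_forall fun x ↦ (Complex.norm_exp_ofReal_mul_I _).le
  rcases ae_eq_const_or_norm_integral_lt_of_norm_le_const hle with hconst | hlt
  · exact ⟨_, hconst⟩
  · rw [probReal_univ, one_mul, ← charFun_apply, ht] at hlt
    exact absurd hlt (lt_irrefl 1)

lemma exists_int_mul_sub_eq {t x y : ℝ}
    (h : Complex.exp ((t * x : ℝ) * Complex.I) = Complex.exp ((t * y : ℝ) * Complex.I)) :
    ∃ n : ℤ, t * (x - y) = n * (2 * π) := by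
  obtain ⟨n, hn⟩ := Complex.exp_eq_exp_iff_exists_int.1 h
  have himag : t * x = t * y + n * (2 * π) := by simpa using congrArg Complex.im hn
  exact ⟨n, by linarith⟩

lemma eq_of_irrational_of_mul_sub_eq {s t x y : ℝ} (hst : Irrational (s / t))
    (hs : ∃ m : ℤ, s * (x - y) = m * (2 * π)) (ht : ∃ n : ℤ, t * (x - y) = n * (2 * π)) :
    x = y := by
  obtain ⟨m, hm⟩ := hs
  obtain ⟨n, hn⟩ := ht
  by_contra hxy
  refine hst ⟨m / n, ?_⟩
  push_cast
  rw [← mul_div_mul_right s t (sub_ne_zero.2 hxy), hm, hn, mul_div_mul_right _ _ two_pi_pos.ne']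

lemma exists_measure_singleton_eq_one_of_norm_charFun_eq_one {μ : Measure ℝ}
    [IsProbabilityMeasure μ] {s t : ℝ} (hst : Irrational (s / t)) (hs : ‖charFun μ s‖ = 1)
    (ht : ‖charFun μ t‖ = 1) : ∃ x, μ {x} = 1 := by
  obtain ⟨z, hz⟩ := exists_ae_cexp_inner_eq_of_norm_charFun_eq_one hs
  obtain ⟨w, hw⟩ := exists_ae_cexp_inner_eq_of_norm_charFun_eq_one ht
  obtain ⟨y, hyz, hyw⟩ := (hz.and hw).exists
  refine ⟨y, (mem_ae_iff_prob_eq_one (measurableSet_singleton y)).1 ?_⟩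
  filter_upwards [hz, hw] with x hxz hxw
  exact eq_of_irrational_of_mul_sub_eq hst (exists_int_mul_sub_eq (hxz.trans hyz.symm))
    (exists_int_mul_sub_eq (hxw.trans hyw.symm))

lemma frequently_norm_charFun_lt_one {μ : Measure ℝ} [IsProbabilityMeasure μ]
    (hμ : ∀ x, μ {x} ≠ 1) : ∃ᶠ t in 𝓝[>] 0, ‖charFun μ t‖ < 1 := by
  intro hone
  obtain ⟨δ, hδ, hsub⟩ := mem_nhdsGT_iff_exists_Ioo_subset.1 hone
  rw [mem_Ioi] at hδ
  have norm_eq_one : ∀ t ∈ Ioo 0 δ, ‖charFun μ t‖ = 1 := fun t ht ↦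
    (norm_charFun_le_one t).antisymm (not_lt.1 (hsub ht))
  have half_mem : δ / 2 ∈ Ioo 0 δ := ⟨half_pos hδ, half_lt_self hδ⟩
  have scaled_mem : δ / 2 / √2 ∈ Ioo 0 δ :=
    ⟨by positivity, (div_le_self half_mem.1.le one_lt_sqrt_two.le).trans_lt half_mem.2⟩
  have hirr : Irrational (δ / 2 / (δ / 2 / √2)) := by
    rw [div_div_cancel₀ half_mem.1.ne']
    exact irrational_sqrt_two
  obtain ⟨x, hx⟩ := exists_measure_singleton_eq_one_of_norm_charFun_eq_one hirr
    (norm_eq_one _ half_mem) (norm_eq_one _ scaled_mem)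
  exact hμ x hx

lemma frequently_norm_charFun_mul_lt_one {μ : Measure ℝ} [IsProbabilityMeasure μ]
    (hμ : ∀ x, μ {x} ≠ 1) {r : ℝ} (hr : 0 < r) : ∃ᶠ t in 𝓝[>] 0, ‖charFun μ (r * t)‖ < 1 := by
  rw [← comap_mulLeft_nhdsGT_zero hr, frequently_comap]
  refine (frequently_norm_charFun_lt_one hμ).mono fun t ht ↦ ?_
  have hscale : r * (t / r) = t := mul_div_cancel₀ t hr.ne'
  exact ⟨t / r, hscale, by rwa [hscale]⟩

end CharFun

section InnerProductSpace

variable {E : Type*} [NormedAddCommGroup E] [InnerProductSpace ℝ E]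

lemma exists_linearIsometryEquiv_map_eq_and_fix {ξ η w : E} (hinner : ⟪ξ, w⟫ = ⟪η, w⟫)
    (hnorm : ‖ξ‖ = ‖η‖) : ∃ f : E ≃ₗᵢ[ℝ] E, f ξ = η ∧ f w = w := by
  refine ⟨(ℝ ∙ (ξ - η))ᗮ.reflection, Submodule.reflection_sub hnorm,
    Submodule.reflection_mem_subspace_eq_self ?_⟩
  rw [Submodule.mem_orthogonal_singleton_iff_inner_right, inner_sub_left, hinner, sub_self]

lemma exists_mem_sphere_inner_eq {ξ w : E} (hξ : ξ ≠ 0) (hw : ‖w‖ = 1) (horth : ⟪ξ, w⟫ = 0)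
    {x y : ℝ} (hxy : x ^ 2 + y ^ 2 = 1) :
    ∃ σ ∈ sphere (0 : E) 1, ⟪ξ, σ⟫ / ‖ξ‖ = x ∧ ⟪σ, w⟫ = y := by
  have hnorm : ‖ξ‖ ≠ 0 := norm_ne_zero_iff.2 hξ
  refine ⟨(x / ‖ξ‖) • ξ + y • w, ?_, ?_, ?_⟩
  · rw [mem_sphere_zero_iff_norm, ← pow_eq_one_iff_of_nonneg (norm_nonneg _) two_ne_zero,
      norm_add_sq_real, real_inner_smul_left, real_inner_smul_right, horth, norm_smul, norm_smul]
    simp [hnorm, hw, hxy]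
  · rw [inner_add_right, real_inner_smul_right, real_inner_smul_right, horth,
      real_inner_self_eq_norm_sq]
    field_simp
    ring
  · rw [inner_add_left, real_inner_smul_left, real_inner_smul_left, horth,
      real_inner_self_eq_norm_sq, hw]
    ring

end InnerProductSpace

section Sphere

variable {E F : Type*} [NormedAddCommGroup E] [NormedSpace ℝ E] [NormedAddCommGroup F]
  [NormedSpace ℝ F]

/-- The homeomorphism of unit spheres induced by a linear isometric equivalence, through which
the surface measures on the two spheres are compared. -/
def unitSphereHomeomorph (f : E ≃ₗᵢ[ℝ] F) : sphere (0 : E) 1 ≃ₜ sphere (0 : F) 1 :=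
  f.toHomeomorph.subtype fun x ↦ by simp

lemma coe_unitSphereHomeomorph (f : E ≃ₗᵢ[ℝ] F) (σ : sphere (0 : E) 1) :
    (unitSphereHomeomorph f σ : F) = f σ := rfl

open scoped Pointwise in
lemma preimage_smul_coe_image_sphere (f : E ≃ₗᵢ[ℝ] F) (R : Set ℝ) (s : Set (sphere (0 : F) 1)) :
    f ⁻¹' (R • ((↑) '' s)) = R • ((↑) '' (unitSphereHomeomorph f ⁻¹' s)) := by
  ext x
  constructor
  · rintro ⟨r, hr, -, ⟨τ, hτ, rfl⟩, hx⟩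
    obtain ⟨σ, rfl⟩ := (unitSphereHomeomorph f).surjective τ
    exact ⟨r, hr, _, ⟨σ, hτ, rfl⟩, f.injective ((f.map_smul r _).trans hx)⟩
  · rintro ⟨r, hr, -, ⟨σ, hσ, rfl⟩, rfl⟩
    exact ⟨r, hr, _, ⟨_, hσ, rfl⟩, (f.map_smul r _).symm⟩

lemma measurePreserving_unitSphereHomeomorph [MeasurableSpace E] [BorelSpace E]
    [MeasurableSpace F] [BorelSpace F] (f : E ≃ₗᵢ[ℝ] F) {μ : Measure E} {ν : Measure F}
    (hf : MeasurePreserving f μ ν) :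
    MeasurePreserving (unitSphereHomeomorph f) μ.toSphere ν.toSphere := by
  have hmeas : Measurable (unitSphereHomeomorph f) := (unitSphereHomeomorph f).measurable
  refine ⟨hmeas, Measure.ext fun s hs ↦ ?_⟩
  rw [Measure.map_apply hmeas hs, ν.toSphere_apply' hs, μ.toSphere_apply' (hmeas hs),
    ← preimage_smul_coe_image_sphere, f.toLinearEquiv.finrank_eq,
    hf.measure_preimage_emb f.toHomeomorph.measurableEmbedding]

end Sphere

instance isOpenPosMeasure_sphμ : sphμ.IsOpenPosMeasure :=
  inferInstanceAs (volume : Measure E3).toSphere.IsOpenPosMeasure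

section Axis

/-- The law of the third velocity coordinate under `F`; it determines `F` when `F` is concentrated
on the third axis. -/
def axisMarginal (F : Measure E3) : Measure ℝ := F.map fun v ↦ v 2

variable {F : Measure E3} [IsProbabilityMeasure F]

instance isProbabilityMeasure_axisMarginal : IsProbabilityMeasure (axisMarginal F) :=
  Measure.isProbabilityMeasure_map (by fun_prop)

lemma ae_mem_axis (haxis : F {v : E3 | v 0 = 0 ∧ v 1 = 0} = 1) : ∀ᵐ v ∂F, v 0 = 0 ∧ v 1 = 0 :=
  (mem_ae_iff_prob_eq_one (by measurability)).2 haxis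

lemma charFn_eq_charFun_axisMarginal (haxis : F {v : E3 | v 0 = 0 ∧ v 1 = 0} = 1) (ξ : E3) :
    charFn F ξ = charFun (axisMarginal F) (-ξ 2) := by
  rw [charFun_apply_real, axisMarginal, integral_map (by fun_prop) (by fun_prop)]
  refine integral_congr_ae ?_
  filter_upwards [ae_mem_axis haxis] with v hv
  simp [PiLp.inner_apply, Fin.sum_univ_three, hv]
  ring_nf

lemma axisMarginal_singleton_ne_one (haxis : F {v : E3 | v 0 = 0 ∧ v 1 = 0} = 1)
    (hF : ∀ v : E3, F {v} ≠ 1) (x : ℝ) : axisMarginal F {x} ≠ 1 := by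
  intro hx
  have hmarginal : ∀ᵐ y ∂axisMarginal F, y = x :=
    (mem_ae_iff_prob_eq_one (measurableSet_singleton x)).2 hx
  have hthird : ∀ᵐ v ∂F, v 2 = x := ae_of_ae_map (by fun_prop) hmarginal
  refine hF !₂[0, 0, x] ((mem_ae_iff_prob_eq_one (measurableSet_singleton _)).1 ?_)
  filter_upwards [ae_mem_axis haxis, hthird] with v hv hvx
  ext i
  fin_cases i <;> simp [hv, hvx]

lemma charFn_eq_one_of_orthogonal (haxis : F {v : E3 | v 0 = 0 ∧ v 1 = 0} = 1) {ξ : E3}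
    (hξ : ξ 2 = 0) : charFn F ξ = 1 := by
  simp [charFn_eq_charFun_axisMarginal haxis, hξ]

lemma charFn_xiPlus_mul_charFn_xiMinus (haxis : F {v : E3 | v 0 = 0 ∧ v 1 = 0} = 1) {ξ : E3}
    (hξ : ξ 2 = 0) (σ : sphere (0 : E3) 1) :
    charFn F (xiPlus ξ σ) * charFn F (xiMinus ξ σ) =
      (‖charFun (axisMarginal F) (‖ξ‖ / 2 * (σ : E3) 2)‖ ^ 2 : ℝ) := by
  have hplus : -(xiPlus ξ σ) 2 = -(‖ξ‖ / 2 * (σ : E3) 2) := by simp [xiPlus, hξ]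
  have hminus : -(xiMinus ξ σ) 2 = ‖ξ‖ / 2 * (σ : E3) 2 := by simp [xiMinus, hξ]
  rw [charFn_eq_charFun_axisMarginal haxis, charFn_eq_charFun_axisMarginal haxis, hplus, hminus,
    charFun_neg, Complex.conj_mul', Complex.ofReal_pow]

end Axis

section DecayDensity

/-- The loss rate of `|ψ|² / 2` at time `0` and a frequency `ξ` orthogonal to the third axis, per
unit of surface in the direction `σ`, when `μ` is the law of the third velocity coordinate. -/
def decayDensity (b : ℝ → ℝ) (μ : Measure ℝ) (ξ : E3) (σ : sphere (0 : E3) 1) : ℝ :=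
  b (⟪ξ, (σ : E3)⟫ / ‖ξ‖) * (1 - ‖charFun μ (‖ξ‖ / 2 * (σ : E3) 2)‖ ^ 2)

variable {b : ℝ → ℝ}

lemma bobylevIntegrand_zero_eq {F : Measure E3} [IsProbabilityMeasure F]
    (haxis : F {v : E3 | v 0 = 0 ∧ v 1 = 0} = 1) {ψ : ℝ → E3 → ℂ} (hψ : ψ 0 = charFn F) {ξ : E3}
    (hξ : ξ 2 = 0) (σ : sphere (0 : E3) 1) :
    bobylevIntegrand b ψ 0 ξ σ = (-decayDensity b (axisMarginal F) ξ σ : ℝ) := by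
  rw [bobylevIntegrand, hψ, charFn_eq_one_of_orthogonal haxis hξ,
    charFn_xiPlus_mul_charFn_xiMinus haxis hξ, decayDensity]
  push_cast
  ring

lemma decayDensity_map (μ : Measure ℝ) (f : E3 ≃ₗᵢ[ℝ] E3) (hf : ∀ v, f v 2 = v 2) (ξ : E3)
    (σ : sphere (0 : E3) 1) :
    decayDensity b μ (f ξ) (unitSphereHomeomorph f σ) = decayDensity b μ ξ σ := by
  simp only [decayDensity, coe_unitSphereHomeomorph, f.inner_map_map, f.norm_map, hf]

lemma integral_decayDensity_eq (μ : Measure ℝ) {ξ η : E3} (hthird : ξ 2 = η 2)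
    (hnorm : ‖ξ‖ = ‖η‖) :
    ∫ σ, decayDensity b μ ξ σ ∂sphμ = ∫ σ, decayDensity b μ η σ ∂sphμ := by
  let e₃ : E3 := EuclideanSpace.single 2 1
  have hinner : ⟪ξ, e₃⟫ = ⟪η, e₃⟫ := by simpa [e₃, EuclideanSpace.inner_single_right] using hthird
  obtain ⟨f, rfl, hfe₃⟩ := exists_linearIsometryEquiv_map_eq_and_fix hinner hnorm
  have hf : ∀ v, f v 2 = v 2 := fun v ↦ by
    simpa [hfe₃, e₃, EuclideanSpace.inner_single_right] using f.inner_map_map v e₃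
  have hpres : MeasurePreserving (unitSphereHomeomorph f) sphμ sphμ :=
    measurePreserving_unitSphereHomeomorph f f.measurePreserving
  rw [← hpres.integral_comp (unitSphereHomeomorph f).measurableEmbedding (decayDensity b μ (f ξ))]
  simp only [decayDensity_map μ f hf]

lemma decayDensity_nonneg (hb : ∀ x, 0 ≤ b x) (μ : Measure ℝ) [IsProbabilityMeasure μ] (ξ : E3)
    (σ : sphere (0 : E3) 1) : 0 ≤ decayDensity b μ ξ σ :=
  mul_nonneg (hb _) <| sub_nonneg.2 <| pow_le_one₀ (norm_nonneg _) (norm_charFun_le_one _)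

lemma exists_isOpen_decayDensity_pos (hb : ∀ᶠ x in 𝓝[<] 1, 0 < b x) {μ : Measure ℝ}
    [IsProbabilityMeasure μ] (hμ : ∀ x, μ {x} ≠ 1) {ξ : E3} (hξ : ξ 2 = 0) (hξ0 : ξ ≠ 0) :
    ∃ U : Set (sphere (0 : E3) 1), IsOpen U ∧ U.Nonempty ∧ ∀ σ ∈ U, 0 < decayDensity b μ ξ σ := by
  obtain ⟨c, hc, hbc⟩ := mem_nhdsLT_iff_exists_Ioo_subset.1 hb
  have hμξ : ∃ᶠ y in 𝓝[>] 0, ‖charFun μ (‖ξ‖ / 2 * y)‖ < 1 :=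
    frequently_norm_charFun_mul_lt_one hμ (half_pos (norm_pos_iff.2 hξ0))
  have hcap : ∀ᶠ y in 𝓝[>] (0 : ℝ), c < √(1 - y ^ 2) :=
    (continuousAt_const.eventually_lt (by fun_prop) (by simpa using hc)).filter_mono
      nhdsWithin_le_nhds
  obtain ⟨y, hy, hcy, hy₀, hy₁⟩ :=
    (hμξ.and_eventually (hcap.and (Ioo_mem_nhdsGT one_pos))).exists
  have hsum : √(1 - y ^ 2) ^ 2 + y ^ 2 = 1 := by rw [sq_sqrt (by nlinarith)]; ring
  obtain ⟨σ, hσ₁, hσξ, hσ⟩ := exists_mem_sphere_inner_eq (w := EuclideanSpace.single 2 1) hξ0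
    (by simp) (by simp [EuclideanSpace.inner_single_right, hξ]) hsum
  replace hσ : σ 2 = y := by simpa [EuclideanSpace.inner_single_right] using hσ
  refine ⟨{σ | ⟪ξ, (σ : E3)⟫ / ‖ξ‖ ∈ Ioo c 1 ∧ ‖charFun μ (‖ξ‖ / 2 * (σ : E3) 2)‖ < 1},
    ?_, ⟨⟨σ, hσ₁⟩, ?_, ?_⟩, fun σ hσ ↦ ?_⟩
  · exact (isOpen_Ioo.preimage (by fun_prop)).inter
      (isOpen_lt (continuous_charFun.comp (by fun_prop)).norm continuous_const)
  · rw [hσξ]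
    exact ⟨hcy, (sqrt_lt' one_pos).2 (by nlinarith)⟩
  · rwa [hσ]
  · exact mul_pos (hbc hσ.1) (sub_pos.2 (pow_lt_one₀ (norm_nonneg _) hσ.2 two_ne_zero))

lemma integral_decayDensity_pos (hb₀ : ∀ x, 0 ≤ b x) (hb : ∀ᶠ x in 𝓝[<] 1, 0 < b x)
    {μ : Measure ℝ} [IsProbabilityMeasure μ] (hμ : ∀ x, μ {x} ≠ 1) {ξ : E3} (hξ : ξ 2 = 0)
    (hξ0 : ξ ≠ 0) (hint : Integrable (decayDensity b μ ξ) sphμ) :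
    0 < ∫ σ, decayDensity b μ ξ σ ∂sphμ := by
  obtain ⟨U, hUo, hUne, hU⟩ := exists_isOpen_decayDensity_pos hb hμ hξ hξ0
  rw [integral_pos_iff_support_of_nonneg (decayDensity_nonneg hb₀ μ ξ) hint]
  exact (hUo.measure_pos sphμ hUne).trans_le (measure_mono fun σ hσ ↦ (hU σ hσ).ne')

lemma hasDerivWithinAt_norm_sq_zero {F : Measure E3} [IsProbabilityMeasure F]
    (haxis : F {v : E3 | v 0 = 0 ∧ v 1 = 0} = 1) {ψ : ℝ → E3 → ℂ}
    (hψ : IsBobylevSolution b ψ (charFn F)) {ξ : E3} (hξ : ξ 2 = 0) :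
    HasDerivWithinAt (fun t ↦ ‖ψ t ξ‖ ^ 2)
      (-(2 * ∫ σ, decayDensity b (axisMarginal F) ξ σ ∂sphμ)) (Ici 0) 0 := by
  have hderiv := (hψ.eq 0 le_rfl ξ).norm_sq
  have hcollision : ∫ σ, bobylevIntegrand b ψ 0 ξ σ ∂sphμ =
      (-∫ σ, decayDensity b (axisMarginal F) ξ σ ∂sphμ : ℝ) := by
    simp only [bobylevIntegrand_zero_eq haxis hψ.init hξ, integral_complex_ofReal, integral_neg]
  rw [hcollision, hψ.init, charFn_eq_one_of_orthogonal haxis hξ] at hderiv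
  simpa [Complex.inner] using hderiv

lemma integrable_decayDensity {F : Measure E3} [IsProbabilityMeasure F]
    (haxis : F {v : E3 | v 0 = 0 ∧ v 1 = 0} = 1) {ψ : ℝ → E3 → ℂ}
    (hψ : IsBobylevSolution b ψ (charFn F)) {ξ : E3} (hξ : ξ 2 = 0) :
    Integrable (decayDensity b (axisMarginal F) ξ) sphμ := by
  have hre := (hψ.integrable 0 le_rfl ξ).re.neg
  simpa [funext (bobylevIntegrand_zero_eq haxis hψ.init hξ)] using hre

end DecayDensity

lemma KernelSingular.eventually_pos {b : ℝ → ℝ} {s K : ℝ} (hb : KernelSingular b s K)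
    (hK : 0 < K) : ∀ᶠ x in 𝓝[<] 1, 0 < b x := by
  have hangle : ∀ᶠ θ in 𝓝[>] 0, 0 < b (cos θ) := by
    filter_upwards [hb.eventually_const_lt hK, self_mem_nhdsWithin] with θ hθ hθ₀
    exact pos_of_mul_pos_left hθ (rpow_nonneg (le_of_lt hθ₀) _)
  have harccos : Tendsto arccos (𝓝[<] 1) (𝓝[>] 0) := by
    refine tendsto_nhdsWithin_iff.2 ⟨?_, ?_⟩
    · simpa using continuous_arccos.continuousWithinAt.tendsto (x := (1 : ℝ)) (s := Iio 1)
    · filter_upwards [self_mem_nhdsWithin] with x hx using arccos_pos.2 hx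
  filter_upwards [harccos.eventually hangle, Ioo_mem_nhdsLT (show (-1 : ℝ) < 1 by norm_num)]
    with x hbx hx
  rwa [cos_arccos hx.1.le hx.2.le] at hbx

theorem initial_decay_on_circle_general {b : ℝ → ℝ} (hb_nonneg : ∀ x, 0 ≤ b x)
    (hb_grazing : ∀ᶠ x in 𝓝[<] 1, 0 < b x) {F₀ : Measure E3} [IsProbabilityMeasure F₀]
    (haxis : F₀ {v : E3 | v 0 = 0 ∧ v 1 = 0} = 1) (hnotdirac : ∀ v₀ : E3, F₀ {v₀} ≠ 1)
    {ψ : ℝ → E3 → ℂ} (hψ : IsBobylevSolution b ψ (charFn F₀)) {lam : ℝ} (hlam : 0 < lam) :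
    ∃ c₁ > (0 : ℝ), ∀ ξ : E3, ξ 2 = 0 → ‖ξ‖ = lam →
      HasDerivWithinAt (fun t ↦ ‖ψ t ξ‖ ^ 2) (-c₁) (Ici 0) 0 := by
  let ξ₀ : E3 := EuclideanSpace.single 0 lam
  have hξ₀ : ξ₀ 2 = 0 := by simp [ξ₀]
  have hnorm : ‖ξ₀‖ = lam := by simp [ξ₀, abs_of_pos hlam]
  have hpos : 0 < ∫ σ, decayDensity b (axisMarginal F₀) ξ₀ σ ∂sphμ :=
    integral_decayDensity_pos hb_nonneg hb_grazing (axisMarginal_singleton_ne_one haxis hnotdirac)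
      hξ₀ (norm_pos_iff.1 (hnorm ▸ hlam)) (integrable_decayDensity haxis hψ hξ₀)
  refine ⟨_, mul_pos two_pos hpos, fun ξ hξ hξnorm ↦ ?_⟩
  rw [← integral_decayDensity_eq _ (hξ.trans hξ₀.symm) (hξnorm.trans hnorm.symm)]
  exact hasDerivWithinAt_norm_sq_zero haxis hψ hξ

/-- strict initial decay of `|ψ|²` on a circle orthogonal to the
axis on which the initial measure is concentrated. -/
theorem initial_decay_on_circle
    (s K : ℝ) (hs0 : 0 < s) (hs1 : s < 1) (hK : 0 < K)
    (b : ℝ → ℝ) (hb_meas : Measurable b) (hb_nonneg : ∀ x, 0 ≤ b x)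
    (hb_sing : KernelSingular b s K)
    (α : ℝ) (hα : 2 * s < α) (hα2 : α ≤ 2)
    (F₀ : Measure E3) [IsProbabilityMeasure F₀]
    (haxis : F₀ {v : E3 | v 0 = 0 ∧ v 1 = 0} = 1)
    (hnotdirac : ∀ v₀ : E3, F₀ {v₀} ≠ 1)
    (ψ₀ : E3 → ℂ) (hψ₀ : ψ₀ = charFn F₀) (hψ₀K : KBdd α ψ₀)
    (ψ : ℝ → E3 → ℂ) (hψ : IsBobylevSolution b ψ ψ₀) :
    ∃ lam > (0:ℝ), ∃ c₁ > (0:ℝ), ∀ ξ : E3, ξ 2 = 0 → ‖ξ‖ = lam →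
      ∀ D : ℝ, HasDerivWithinAt (fun t => ‖ψ t ξ‖ ^ 2) D (Set.Ici 0) 0 → D ≤ -c₁ := by
  subst hψ₀
  obtain ⟨c₁, hc₁, hdecay⟩ := initial_decay_on_circle_general hb_nonneg
    (hb_sing.eventually_pos hK) haxis hnotdirac hψ one_pos
  exact ⟨1, one_pos, c₁, hc₁, fun ξ hξ hnorm D hD ↦
    ((uniqueDiffOn_Ici 0 0 self_mem_Ici).eq_deriv _ hD (hdecay ξ hξ hnorm)).le⟩
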